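/- There exists a schedule S* attaining the minimum of cost(S) = ∑_j w_j·C_j(S) + E(S) over all schedules such that the zero-weight jobs are scheduled completely after all other jobs: for all jobs j and k with w_j = 0 and w_k > 0, every time slot assigned to j by S* is strictly greater than every time slot assigned to k by S*. -/

import Mathlib

open Finset

/-- A schedule: assigns to each unit time slot `[t,t+1)` at most one job;
each job `j` receives exactly `p j` slots, and no slot at or beyond the horizon `D` is used. -/
structure Schedule (n : ℕ) (p : Fin n → ℕ) (D : ℕ) where
  assign : ℕ → Option (Fin n)
  card_slots : ∀ j : Fin n,
    ((Finset.range D).filter (fun t => assign t = some j)).card = p j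
  beyond : ∀ t, D ≤ t → assign t = none

variable {n D : ℕ} {p : Fin n → ℕ}

/-- The set of time slots assigned to job `j`. -/
def jobSlots (S : Schedule n p D) (j : Fin n) : Finset ℕ :=
  (Finset.range D).filter (fun t => S.assign t = some j)

/-- The start time of job `j`: the least `t` with `S.assign t = some j`. -/
noncomputable def startTime (S : Schedule n p D) (j : Fin n) : ℕ :=
  sInf {t | S.assign t = some j}

/-- The completion time of job `j`: one plus the greatest `t` with `S.assign t = some j`. -/
def completion (S : Schedule n p D) (j : Fin n) : ℕ :=
  (jobSlots S j).sup id + 1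

/-- The utilization cost of a schedule: total tariff of all utilized slots. -/
def ucost (e : ℕ → ℚ) (S : Schedule n p D) : ℚ :=
  ∑ t ∈ (Finset.range D).filter (fun t => S.assign t ≠ none), e t

/-!
Among the schedules of minimum cost, take one minimising the sum of the slots given to the jobs that
are to come first. If one of the other jobs occupied a slot before one of theirs, exchanging the two
slots would keep the utilized set, and would move the completion times of the two jobs only in the
direction that does not increase the cost, while lowering that sum.
-/

attribute [ext] Schedule

namespace Schedule

lemma lt_of_assign_eq_some {S : Schedule n p D} {t : ℕ} {j : Fin n} (h : S.assign t = some j) :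
    t < D := by
  by_contra! ht
  simp [S.beyond t ht] at h

@[simp]
lemma mem_jobSlots {S : Schedule n p D} {t : ℕ} {j : Fin n} :
    t ∈ jobSlots S j ↔ S.assign t = some j := by
  simpa [jobSlots] using lt_of_assign_eq_some

instance : Finite (Schedule n p D) := by
  refine Finite.of_injective (fun S (t : Fin D) ↦ S.assign t) fun S T h ↦ ?_
  ext1
  funext t
  rcases lt_or_ge t D with ht | ht
  · exact congrFun h ⟨t, ht⟩
  · rw [S.beyond t ht, T.beyond t ht]

/-- The schedule that runs the `i`-th unit of job `j` in slot `g ⟨j, i⟩`. It witnesses that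
schedules exist when the horizon is long enough. -/
noncomputable def ofEmbedding (g : (Σ j, Fin (p j)) ↪ Fin D) : Schedule n p D where
  assign t := (Function.partialInv (g.trans Fin.valEmbedding) t).map Sigma.fst
  card_slots j := by
    let jobEmbedding : Fin (p j) ↪ ℕ :=
      (Function.Embedding.sigmaMk j).trans (g.trans Fin.valEmbedding)
    rw [← card_fin (p j), ← card_map jobEmbedding]
    congr 1
    ext t
    have hlt : ∀ i, (g ⟨j, i⟩ : ℕ) = t → t < D := by
      rintro i rfl
      exact (g ⟨j, i⟩).isLt
    simpa [jobEmbedding, (g.trans Fin.valEmbedding).injective.isPartialInv _ _] using hlt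
  beyond t ht := by
    rw [Option.map_eq_none_iff, Option.eq_none_iff_forall_ne_some]
    intro x hx
    obtain rfl := ((g.trans Fin.valEmbedding).injective.isPartialInv x t).1 hx
    exact ht.not_gt (g x).isLt

lemma nonempty_of_sum_le (hD : ∑ j, p j ≤ D) : Nonempty (Schedule n p D) := by
  obtain ⟨g⟩ := Function.Embedding.nonempty_of_card_le
    (α := Σ j, Fin (p j)) (β := Fin D) (by simpa using hD)
  exact ⟨ofEmbedding g⟩

/-- The schedule obtained from `S` by exchanging the contents of the slots `a` and `b`. Taking
`a b : Fin D` keeps the exchange within the horizon. -/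
def swap (S : Schedule n p D) (a b : Fin D) : Schedule n p D where
  assign t := S.assign (Equiv.swap (a : ℕ) b t)
  card_slots j := by
    rw [← S.card_slots j]
    refine card_equiv (Equiv.swap (a : ℕ) b) fun t ↦ ?_
    simp only [mem_filter, mem_range]
    grind
  beyond t ht := by
    rw [Equiv.swap_apply_of_ne_of_ne (by omega) (by omega), S.beyond t ht]

section Swap

variable (S : Schedule n p D) (a b : Fin D)

lemma swap_assign (t : ℕ) : (S.swap a b).assign t = S.assign (Equiv.swap (a : ℕ) b t) := rfl

@[simp]
lemma swap_swap : (S.swap a b).swap a b = S := by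
  ext1
  funext t
  simp [swap_assign]

lemma ucost_swap (e : ℕ → ℚ) (ha : S.assign a ≠ none) (hb : S.assign b ≠ none) :
    ucost e (S.swap a b) = ucost e S := by
  unfold ucost
  congr 1
  refine filter_congr fun t _ ↦ ?_
  grind [swap_assign]

variable {S a b}

lemma completion_swap_le {i : Fin n} (hab : a ≤ b) (ha : S.assign a ≠ some i) :
    completion (S.swap a b) i ≤ completion S i := by
  refine Nat.add_le_add_right (Finset.sup_le fun t ht ↦ ?_) 1
  rw [mem_jobSlots, swap_assign] at ht
  have ht_le : t ≤ Equiv.swap (a : ℕ) b t := by grind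
  exact ht_le.trans (le_sup (f := id) (mem_jobSlots.2 ht))

lemma le_completion_swap {i : Fin n} (hab : a ≤ b) (hb : S.assign b ≠ some i) :
    completion S i ≤ completion (S.swap a b) i := by
  simpa using completion_swap_le (S := S.swap a b) hab (by simpa [swap_assign] using hb)

end Swap

/-- The total cost of `S` when completing job `j` at time `c` costs `f j c`. The weighted total
cost is the case `f j c = w j * c`. -/
def cost (f : Fin n → ℕ → ℚ) (e : ℕ → ℚ) (S : Schedule n p D) : ℚ :=
  ∑ j, f j (completion S j) + ucost e S

lemma cost_swap_le {S : Schedule n p D} {a b : Fin D} {j k : Fin n} {f : Fin n → ℕ → ℚ}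
    (e : ℕ → ℚ) (hjk : j ≠ k) (hj : Antitone (f j)) (hk : Monotone (f k)) (hab : a ≤ b)
    (ha : S.assign a = some j) (hb : S.assign b = some k) :
    cost f e (S.swap a b) ≤ cost f e S := by
  unfold cost
  rw [ucost_swap S a b e (by simp [ha]) (by simp [hb])]
  gcongr with i
  have hle (h : i ≠ j) : completion (S.swap a b) i ≤ completion S i :=
    completion_swap_le hab (by simpa [ha] using h.symm)
  have hge (h : i ≠ k) : completion S i ≤ completion (S.swap a b) i :=
    le_completion_swap hab (by simpa [hb] using h.symm)
  rcases eq_or_ne i j with rfl | hij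
  · exact hj (hge hjk)
  rcases eq_or_ne i k with rfl | hik
  · exact hk (hle hjk.symm)
  · rw [(hle hij).antisymm (hge hik)]

/-- The set of slots given to the jobs in `E`. The sum of its elements measures how late these jobs
run, and breaks ties between schedules of the same cost. -/
def slotsOf (S : Schedule n p D) (E : Finset (Fin n)) : Finset ℕ :=
  E.biUnion (jobSlots S)

lemma mem_slotsOf {S : Schedule n p D} {E : Finset (Fin n)} {t : ℕ} :
    t ∈ S.slotsOf E ↔ ∃ k ∈ E, S.assign t = some k := by
  simp [slotsOf]

lemma slotsOf_swap {S : Schedule n p D} {E : Finset (Fin n)} {a b : Fin D}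
    (ha : ↑a ∉ S.slotsOf E) (hb : ↑b ∈ S.slotsOf E) :
    (S.swap a b).slotsOf E = insert ↑a ((S.slotsOf E).erase b) := by
  ext t
  grind [mem_slotsOf, swap_assign]

lemma sum_slotsOf_swap_lt {S : Schedule n p D} {E : Finset (Fin n)} {a b : Fin D} (hab : a < b)
    (ha : ↑a ∉ S.slotsOf E) (hb : ↑b ∈ S.slotsOf E) :
    ∑ t ∈ (S.swap a b).slotsOf E, t < ∑ t ∈ S.slotsOf E, t := by
  rw [slotsOf_swap ha hb, sum_insert (by simp [ha]), ← add_sum_erase _ _ hb]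
  gcongr
  exact hab

end Schedule

open Schedule

theorem zero_weight_jobs_last_general {f : Fin n → ℕ → ℚ} {E : Finset (Fin n)}
    (hanti : ∀ j ∉ E, Antitone (f j)) (hmono : ∀ k ∈ E, Monotone (f k))
    (e : ℕ → ℚ) (hD : ∑ j, p j ≤ D) :
    ∃ S' : Schedule n p D, (∀ S : Schedule n p D, cost f e S' ≤ cost f e S) ∧
      ∀ j ∉ E, ∀ k ∈ E, ∀ t t', S'.assign t = some j → S'.assign t' = some k → t' < t := by
  have := nonempty_of_sum_le hD
  obtain ⟨S, hS⟩ := Finite.exists_min fun S : Schedule n p D ↦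
    toLex (cost f e S, ∑ t ∈ S.slotsOf E, t)
  simp only [Prod.Lex.toLex_le_toLex'] at hS
  refine ⟨S, fun T ↦ (hS T).1, fun j hj k hk t t' ht ht' ↦ ?_⟩
  by_contra! hle
  have ht_notMem : t ∉ S.slotsOf E := by simpa [mem_slotsOf, ht] using hj
  have ht'_mem : t' ∈ S.slotsOf E := mem_slotsOf.2 ⟨k, hk, ht'⟩
  have hlt : t < t' := hle.lt_of_ne (by rintro rfl; exact ht_notMem ht'_mem)
  let a : Fin D := ⟨t, lt_of_assign_eq_some ht⟩
  let b : Fin D := ⟨t', lt_of_assign_eq_some ht'⟩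
  have hcost : cost f e (S.swap a b) ≤ cost f e S :=
    cost_swap_le e (by rintro rfl; exact hj hk) (hanti j hj) (hmono k hk) hle ht ht'
  have hsum : ∑ s ∈ (S.swap a b).slotsOf E, s < ∑ s ∈ S.slotsOf E, s :=
    sum_slotsOf_swap_lt hlt ht_notMem ht'_mem
  exact hsum.not_ge ((hS _).2 ((hS _).1.antisymm hcost))

/-- There is a minimum-cost schedule (weighted completion times plus utilization cost)
scheduling all zero-weight jobs completely after all positive-weight jobs. -/
theorem zero_weight_jobs_last (n : ℕ) (p : Fin n → ℕ) (hp : ∀ j, 1 ≤ p j)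
    (w : Fin n → ℚ) (hw : ∀ j, 0 ≤ w j)
    (e : ℕ → ℚ) (he : ∀ t, 0 ≤ e t) (D : ℕ) (hD : ∑ j, p j ≤ D) :
    ∃ S' : Schedule n p D,
      (∀ S : Schedule n p D,
        (∑ j : Fin n, w j * (completion S' j : ℚ)) + ucost e S'
          ≤ (∑ j : Fin n, w j * (completion S j : ℚ)) + ucost e S) ∧
      (∀ j k : Fin n, w j = 0 → 0 < w k → ∀ t t',
        S'.assign t = some j → S'.assign t' = some k → t' < t) := by
  obtain ⟨S', hmin, hlast⟩ := zero_weight_jobs_last_general (f := fun j c ↦ w j * c)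
    (E := {k | 0 < w k}) (fun j hj ↦ Nat.mono_cast.const_mul_of_nonpos (by simpa using hj))
    (fun k hk ↦ Nat.mono_cast.const_mul (mem_filter.1 hk).2.le) e hD
  exact ⟨S', hmin, fun j k hj hk ↦ hlast j (by simp [hj]) k (by simpa using hk)⟩
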